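/- Let T > 0 and let D ⊂ ℝ^d (d ≥ 1) be a bounded open set with Lebesgue measure |D| > 0, closure D̄, and boundary ∂D. Let k > 0, γ ≥ 0, δ ≥ 0, η ≥ 0 be constants and let p, q, n > 1 and m ≥ 0 be exponents with m + n ≥ q ≥ p. Let λ₁ > 0 and let φ : D̄ → ℝ be continuous, twice continuously differentiable on D, with φ(x) > 0 for x ∈ D, φ(x) = 0 for x ∈ ∂D, −Δφ(x) = λ₁·φ(x) for x ∈ D, and ∫_D φ(x) dx = 1; set C₁ = sup_{x∈D} φ(x). Let β : [0,T] → ℝ be continuous with β*(t) = sup_{0≤s≤t}|β(s)|, and let b > 1 satisfy, for all t ∈ [0,T]: b^{q−p}·e^{−η(m+n−1)β*(t)} ≥ (k·C₁^p + λ₁·C₁)·|D|^{q−1}. Let v : [0,T] × D̄ → ℝ be continuous and nonnegative, with ∂v/∂t continuous and v(t,·) twice continuously differentiable in x on (0,T] × D, satisfying for all (t,x) ∈ (0,T] × D: ∂v/∂t(t,x) = Δv(t,x) + γ·v(t,x) + e^{(q−1)ηβ(t)}·∫_D v(t,y)^q dy − k·e^{(p−1)ηβ(t)}·v(t,x)^p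 + δ·e^{(m+n−1)ηβ(t)}·v(t,x)^m·∫_D v(t,y)^n dy, with v(t,x) = 0 for x ∈ ∂D, t ∈ (0,T], and v(0,x) ≥ b·φ(x) for x ∈ D. Then v(t,x) ≥ b·φ(x) for all (t,x) ∈ [0,T] × D̄. -/

import Mathlib

open MeasureTheory Real Set

/-- The Laplacian in the spatial variable: `Δf(x) = ∑ i, ∂²f(x)/∂xᵢ²`. -/
noncomputable def laplacian {d : ℕ} (f : EuclideanSpace ℝ (Fin d) → ℝ)
    (x : EuclideanSpace ℝ (Fin d)) : ℝ :=
  ∑ i, fderiv ℝ (fun y => fderiv ℝ f y (EuclideanSpace.single i 1)) x (EuclideanSpace.single i 1)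

/-!
If `v` drops below a stationary subsolution `ψ` with zero boundary values, look at a negative
spatial minimum of `v - ψ`. There the local terms have the favourable sign, and the convexity of
`x ↦ x ^ q` bounds the deficit of the nonlocal term `∫ v ^ q - ∫ ψ ^ q` by a multiple of that
minimum, so multiplying `v - ψ` by an exponential in time contradicts the second derivative test.
Jensen's inequality for the density `φ`, `|D| ^ (1 - q) ≤ ∫ φ ^ q`, turns the first condition of
(B1) into the statement that `ψ = b φ` is a subsolution; the `γ` and `δ` terms only help.
-/

section RealPowers

variable {α : Type*} [MeasurableSpace α] {μ : Measure α} [IsFiniteMeasure μ] {q : ℝ}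

theorem rpow_sub_rpow_le_mul_sub {x y : ℝ} (hq : 1 ≤ q) (hx : 0 ≤ x) (hxy : x ≤ y) :
    y ^ q - x ^ q ≤ q * y ^ (q - 1) * (y - x) := by
  rcases hxy.eq_or_lt with rfl | hlt
  · simp
  · have h := (convexOn_rpow hq).slope_le_of_hasDerivAt hx (hx.trans hxy) hlt
      (hasDerivAt_rpow_const (Or.inr hq))
    rwa [slope_def_field, div_le_iff₀ (sub_pos.2 hlt)] at h

theorem rpow_add_mul_le_rpow {x y c M : ℝ} (hq : 1 ≤ q) (hx : 0 ≤ x) (hy : 0 ≤ y) (hyM : y ≤ M)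
    (hc : c ≤ 0) (hcx : c ≤ x - y) : y ^ q + q * M ^ (q - 1) * c ≤ x ^ q := by
  have hM : 0 ≤ q * M ^ (q - 1) := mul_nonneg (by linarith) (rpow_nonneg (hy.trans hyM) _)
  rcases le_total y x with hyx | hxy
  · linarith [rpow_le_rpow hy hyx (by linarith : 0 ≤ q), mul_nonpos_of_nonneg_of_nonpos hM hc]
  · have hslope : q * y ^ (q - 1) * (y - x) ≤ q * M ^ (q - 1) * (-c) := by
      have : 0 ≤ y - x := sub_nonneg.2 hxy
      have hxc : y - x ≤ -c := by linarith
      gcongr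
    linarith [rpow_sub_rpow_le_mul_sub hq hx hxy]

theorem integral_rpow_add_mul_le_integral_rpow {f g : α → ℝ} {c M : ℝ} (hq : 1 ≤ q)
    (hf : ∀ᵐ x ∂μ, 0 ≤ f x) (hg : ∀ᵐ x ∂μ, 0 ≤ g x) (hgM : ∀ᵐ x ∂μ, g x ≤ M)
    (hfq : Integrable (fun x => f x ^ q) μ) (hgq : Integrable (fun x => g x ^ q) μ)
    (hc : c ≤ 0) (hcf : ∀ᵐ x ∂μ, c ≤ f x - g x) :
    (∫ x, g x ^ q ∂μ) + μ.real univ * (q * M ^ (q - 1)) * c ≤ ∫ x, f x ^ q ∂μ :=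
  calc (∫ x, g x ^ q ∂μ) + μ.real univ * (q * M ^ (q - 1)) * c
      = ∫ x, (g x ^ q + q * M ^ (q - 1) * c) ∂μ := by
        rw [integral_add hgq (integrable_const _), integral_const, smul_eq_mul, mul_assoc]
    _ ≤ ∫ x, f x ^ q ∂μ := by
        refine integral_mono_ae (hgq.add (integrable_const _)) hfq ?_
        filter_upwards [hf, hg, hgM, hcf] with x hfx hgx hgMx hcx
        exact rpow_add_mul_le_rpow hq hfx hgx hgMx hc hcx

theorem rpow_integral_le_measureReal_rpow_mul_integral_rpow {f : α → ℝ} (hq : 1 ≤ q)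
    (hf : ∀ᵐ x ∂μ, 0 ≤ f x) (hfi : Integrable f μ) (hfq : Integrable (fun x => f x ^ q) μ) :
    (∫ x, f x ∂μ) ^ q ≤ μ.real univ ^ (q - 1) * ∫ x, f x ^ q ∂μ := by
  rcases eq_or_ne μ 0 with rfl | hμ
  · simp [zero_rpow (by linarith : q ≠ 0)]
  have : NeZero μ := ⟨hμ⟩
  have hV : 0 < μ.real univ := measureReal_univ_pos
  have hJensen := (convexOn_rpow hq).map_average_le
    (continuousOn_id.rpow_const fun _ _ => Or.inr (by linarith)) isClosed_Ici hf hfi hfq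
  rw [average_eq, average_eq, smul_eq_mul, smul_eq_mul,
    mul_rpow (inv_nonneg.2 hV.le) (integral_nonneg_of_ae hf), inv_rpow hV.le] at hJensen
  rw [rpow_sub_one hV.ne', div_mul_eq_mul_div, mul_div_assoc, ← inv_mul_le_iff₀ (by positivity)]
  rwa [div_eq_inv_mul]

theorem integrableOn_rpow_of_continuousOn_closure {X : Type*} [PseudoMetricSpace X] [ProperSpace X]
    [MeasurableSpace X] [OpensMeasurableSpace X] {ν : Measure X} [IsFiniteMeasureOnCompacts ν]
    {s : Set X} {f : X → ℝ} (hs : Bornology.IsBounded s) (hq : 0 ≤ q)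
    (hf : ContinuousOn f (closure s)) : IntegrableOn (fun x => f x ^ q) s ν :=
  ((hf.rpow_const fun _ _ => Or.inr hq).integrableOn_compact' hs.isCompact_closure
    isClosed_closure.measurableSet).mono_set subset_closure

theorem const_le_mul_integral_rpow_of_integral_eq_one {c R : ℝ} {φ : α → ℝ} (hq : 1 ≤ q)
    (hφ : ∀ᵐ x ∂μ, 0 ≤ φ x) (hφq : Integrable (fun x => φ x ^ q) μ) (hφ_int : ∫ x, φ x ∂μ = 1)
    (hR : 0 ≤ R) (hcR : c * μ.real univ ^ (q - 1) ≤ R) : c ≤ R * ∫ x, φ x ^ q ∂μ := by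
  have hφq_nonneg : 0 ≤ ∫ x, φ x ^ q ∂μ :=
    integral_nonneg_of_ae (hφ.mono fun x hx => rpow_nonneg hx q)
  have hφi : Integrable φ μ := not_imp_comm.1 integral_undef (by simp [hφ_int])
  rcases le_total c 0 with hc | hc
  · exact hc.trans (mul_nonneg hR hφq_nonneg)
  calc c = c * (∫ x, φ x ∂μ) ^ q := by rw [hφ_int, one_rpow, mul_one]
    _ ≤ c * (μ.real univ ^ (q - 1) * ∫ x, φ x ^ q ∂μ) := by
        gcongr
        exact rpow_integral_le_measureReal_rpow_mul_integral_rpow hq hφ hφi hφq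
    _ = c * μ.real univ ^ (q - 1) * ∫ x, φ x ^ q ∂μ := (mul_assoc _ _ _).symm
    _ ≤ R * ∫ x, φ x ^ q ∂μ := by gcongr

end RealPowers

section SecondDerivativeTest

open scoped Laplacian Topology

variable {E : Type*} [NormedAddCommGroup E]

theorem deriv_deriv_nonneg_of_isLocalMin {g : ℝ → ℝ} {t : ℝ} (hg : IsLocalMin g t)
    (hc : ContinuousAt g t) : 0 ≤ deriv (deriv g) t := by
  by_contra! hneg
  have hmax := isLocalMax_of_deriv_deriv_neg hneg hg.deriv_eq_zero hc
  have hconst : g =ᶠ[𝓝 t] fun _ => g t := by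
    filter_upwards [hg, hmax] with s h₁ h₂ using le_antisymm h₂ h₁
  have hzero : deriv (deriv g) t = 0 := by simpa using hconst.deriv.deriv_eq
  exact hneg.ne hzero

theorem differentiableAt_fderiv_of_contDiffAt {F : Type*} [NormedAddCommGroup F] [NormedSpace ℝ F]
    [NormedSpace ℝ E] {f : E → F} {x : E} (hf : ContDiffAt ℝ 2 f x) :
    DifferentiableAt ℝ (fderiv ℝ f) x :=
  (hf.fderiv_right (m := 1) (by norm_num)).differentiableAt (by norm_num)

theorem fderiv_fderiv_apply {F : Type*} [NormedAddCommGroup F] [NormedSpace ℝ F]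
    [NormedSpace ℝ E] {f : E → F} {x : E} (hf : ContDiffAt ℝ 2 f x) (e e' : E) :
    fderiv ℝ (fun y => fderiv ℝ f y e) x e' = fderiv ℝ (fderiv ℝ f) x e' e := by
  simp [fderiv_clm_apply (differentiableAt_fderiv_of_contDiffAt hf) (differentiableAt_const e)]

theorem fderiv_fderiv_apply_self_nonneg_of_isLocalMin [NormedSpace ℝ E] {f : E → ℝ} {x : E}
    (hf : ContDiffAt ℝ 2 f x) (hmin : IsLocalMin f x) (e : E) :
    0 ≤ fderiv ℝ (fderiv ℝ f) x e e := by
  have hline : ∀ s : ℝ, HasDerivAt (fun s : ℝ => x + s • e) e s := fun s => by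
    simpa using ((hasDerivAt_id s).smul_const e).const_add x
  have hx : x + (0 : ℝ) • e = x := by simp
  have htendsto : Filter.Tendsto (fun s : ℝ => x + s • e) (𝓝 0) (𝓝 x) := by
    simpa using (hline 0).continuousAt.tendsto
  have hderiv : deriv (fun s : ℝ => f (x + s • e)) =ᶠ[𝓝 0] fun s => fderiv ℝ f (x + s • e) e := by
    filter_upwards [htendsto.eventually (hf.eventually (by simp))] with s hs
    exact ((hs.differentiableAt (by norm_num)).hasFDerivAt.comp_hasDerivAt s (hline s)).deriv
  have hderiv₂ : HasDerivAt (fun s : ℝ => fderiv ℝ f (x + s • e) e)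
      (fderiv ℝ (fderiv ℝ f) x e e) 0 := by
    have h := ((differentiableAt_fderiv_of_contDiffAt hf).clm_apply
      (differentiableAt_const e)).hasFDerivAt.comp_hasDerivAt_of_eq (0 : ℝ) (hline 0) hx.symm
    rwa [fderiv_fderiv_apply hf] at h
  rw [← hderiv₂.deriv, ← hderiv.deriv_eq]
  refine deriv_deriv_nonneg_of_isLocalMin ?_ ?_
  · filter_upwards [htendsto.eventually hmin] with s hs
    simpa only [hx] using hs
  · exact ContinuousAt.comp_of_eq hf.continuousAt (hline 0).continuousAt hx

theorem laplacian_nonneg_of_isLocalMin [InnerProductSpace ℝ E] [FiniteDimensional ℝ E]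
    {f : E → ℝ} {x : E} (hf : ContDiffAt ℝ 2 f x) (hmin : IsLocalMin f x) : 0 ≤ (Δ f) x := by
  rw [InnerProductSpace.laplacian_eq_iteratedFDeriv_stdOrthonormalBasis]
  refine Finset.sum_nonneg fun i _ => ?_
  simpa [iteratedFDeriv_two_apply] using fderiv_fderiv_apply_self_nonneg_of_isLocalMin hf hmin _

theorem laplacian_eq_laplacian_of_contDiffAt {d : ℕ} {f : EuclideanSpace ℝ (Fin d) → ℝ}
    {x : EuclideanSpace ℝ (Fin d)} (hf : ContDiffAt ℝ 2 f x) : laplacian f x = (Δ f) x := by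
  rw [InnerProductSpace.laplacian_eq_iteratedFDeriv_orthonormalBasis f
    (EuclideanSpace.basisFun (Fin d) ℝ)]
  simp [laplacian, fderiv_fderiv_apply hf, iteratedFDeriv_two_apply]

end SecondDerivativeTest

section Parabolic

open scoped Laplacian

theorem hasDerivWithinAt_nonpos_of_isMinOn_Icc {f : ℝ → ℝ} {f' a b t : ℝ} (ht : t ∈ Ioc a b)
    (hf : HasDerivWithinAt f f' (Icc a b) t) (hmin : IsMinOn f (Icc a b) t) : f' ≤ 0 := by
  have hcone : a - t ∈ posTangentConeAt (Icc a b) t :=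
    sub_mem_posTangentConeAt_of_segment_subset <|
      (convex_Icc a b).segment_subset (Ioc_subset_Icc_self ht) (left_mem_Icc.2 (ht.1.le.trans ht.2))
  have h : 0 ≤ (a - t) * f' := by
    simpa using hmin.localize.hasFDerivWithinAt_nonneg hf.hasFDerivWithinAt hcone
  exact nonpos_of_mul_nonneg_right h (sub_neg.2 ht.1)

variable {E : Type*} [NormedAddCommGroup E] [InnerProductSpace ℝ E] [FiniteDimensional ℝ E]
  {T : ℝ} {D : Set E}

/-- The differential inequality is required only at negative spatial minima, which is what makes
the principle applicable to equations with nonlocal terms. -/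
theorem nonneg_of_mul_le_deriv_sub_laplacian (hDopen : IsOpen D) (hDbdd : Bornology.IsBounded D)
    {w wt : ℝ → E → ℝ} {K : ℝ}
    (hw_cont : ContinuousOn (fun z : ℝ × E => w z.1 z.2) (Icc 0 T ×ˢ closure D))
    (hw_t : ∀ t ∈ Ioc 0 T, ∀ x ∈ D, HasDerivWithinAt (fun s => w s x) (wt t x) (Icc 0 T) t)
    (hw_x : ∀ t ∈ Ioc 0 T, ContDiffOn ℝ 2 (w t) D)
    (hw_bdry : ∀ t ∈ Icc 0 T, ∀ x ∈ frontier D, 0 ≤ w t x)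
    (hw_init : ∀ x ∈ D, 0 ≤ w 0 x)
    (hw_ineq : ∀ t ∈ Ioc 0 T, ∀ x ∈ D, w t x < 0 → IsMinOn (w t) (closure D) x →
      K * w t x ≤ wt t x - (Δ (w t)) x) :
    ∀ t ∈ Icc 0 T, ∀ x ∈ closure D, 0 ≤ w t x := by
  intro t ht x hx
  have hW_cont : ContinuousOn (fun z : ℝ × E => exp (-(K + 1) * z.1) * w z.1 z.2)
      (Icc 0 T ×ˢ closure D) :=
    ContinuousOn.mul (by fun_prop) hw_cont
  obtain ⟨⟨t₀, x₀⟩, ⟨ht₀, hx₀⟩, hmin⟩ :=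
    (isCompact_Icc.prod hDbdd.isCompact_closure).exists_isMinOn ⟨(t, x), ht, hx⟩ hW_cont
  rw [isMinOn_iff] at hmin
  suffices hw₀ : 0 ≤ w t₀ x₀ from
    nonneg_of_mul_nonneg_right
      ((mul_nonneg (exp_pos _).le hw₀).trans (hmin (t, x) ⟨ht, hx⟩)) (exp_pos (-(K + 1) * t))
  by_contra! hneg
  have hx₀D : x₀ ∈ D := by
    by_contra hx₀D
    exact hneg.not_ge (hw_bdry t₀ ht₀ x₀ ⟨hx₀, by rwa [hDopen.interior_eq]⟩)
  have ht₀pos : t₀ ∈ Ioc 0 T := by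
    refine ⟨ht₀.1.lt_of_ne ?_, ht₀.2⟩
    rintro rfl
    exact hneg.not_ge (hw_init x₀ hx₀D)
  have hmin_space : IsMinOn (w t₀) (closure D) x₀ := fun y hy =>
    le_of_mul_le_mul_left (hmin (t₀, y) ⟨ht₀, hy⟩) (exp_pos _)
  have hlap : 0 ≤ (Δ (w t₀)) x₀ :=
    laplacian_nonneg_of_isLocalMin ((hw_x t₀ ht₀pos).contDiffAt (hDopen.mem_nhds hx₀D)) <|
      hmin_space.isLocalMin (Filter.mem_of_superset (hDopen.mem_nhds hx₀D) subset_closure)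
  have htime : wt t₀ x₀ ≤ (K + 1) * w t₀ x₀ := by
    have hexp : HasDerivAt (fun s => exp (-(K + 1) * s)) (exp (-(K + 1) * t₀) * -(K + 1)) t₀ := by
      simpa using ((hasDerivAt_id t₀).const_mul (-(K + 1))).exp
    have h := hasDerivWithinAt_nonpos_of_isMinOn_Icc ht₀pos
      (hexp.hasDerivWithinAt.mul (hw_t t₀ ht₀pos x₀ hx₀D))
      fun s hs => hmin (s, x₀) ⟨hs, hx₀⟩
    have h' : exp (-(K + 1) * t₀) * (wt t₀ x₀ - (K + 1) * w t₀ x₀) ≤ 0 := by linarith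
    exact sub_nonpos.1 (nonpos_of_mul_nonpos_right h' (exp_pos _))
  linarith [hw_ineq t₀ ht₀pos x₀ hx₀D hneg hmin_space]

theorem le_of_nonlocal_supersolution [MeasurableSpace E] [BorelSpace E] {μ : Measure E}
    [IsFiniteMeasureOnCompacts μ] (hDopen : IsOpen D) (hDbdd : Bornology.IsBounded D)
    {p q A : ℝ} (hp : 0 ≤ p) (hq : 1 ≤ q) {a c : ℝ → ℝ} (ha : ∀ t ∈ Ioc 0 T, a t ∈ Icc 0 A)
    (hc : ∀ t ∈ Ioc 0 T, 0 ≤ c t) {ψ : E → ℝ} (hψ_cont : ContinuousOn ψ (closure D))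
    (hψ_smooth : ContDiffOn ℝ 2 ψ D) (hψ_nonneg : ∀ x ∈ D, 0 ≤ ψ x)
    (hψ_bdry : ∀ x ∈ frontier D, ψ x = 0)
    (hψ_sub : ∀ t ∈ Ioc 0 T, ∀ x ∈ D,
      0 ≤ (Δ ψ) x + a t * (∫ y in D, ψ y ^ q ∂μ) - c t * ψ x ^ p)
    {v vt : ℝ → E → ℝ}
    (hv_cont : ContinuousOn (fun z : ℝ × E => v z.1 z.2) (Icc 0 T ×ˢ closure D))
    (hv_nonneg : ∀ t ∈ Icc 0 T, ∀ x ∈ closure D, 0 ≤ v t x)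
    (hv_t : ∀ t ∈ Ioc 0 T, ∀ x ∈ D, HasDerivWithinAt (fun s => v s x) (vt t x) (Icc 0 T) t)
    (hv_x : ∀ t ∈ Ioc 0 T, ContDiffOn ℝ 2 (v t) D)
    (hv_super : ∀ t ∈ Ioc 0 T, ∀ x ∈ D,
      (Δ (v t)) x + a t * (∫ y in D, v t y ^ q ∂μ) - c t * v t x ^ p ≤ vt t x)
    (hv_init : ∀ x ∈ D, ψ x ≤ v 0 x) :
    ∀ t ∈ Icc 0 T, ∀ x ∈ closure D, ψ x ≤ v t x := by
  have hq₀ : 0 ≤ q := by linarith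
  have : IsFiniteMeasure (μ.restrict D) :=
    isFiniteMeasure_restrict.2 (hDbdd.measure_lt_top).ne
  have hae : ∀ {P : E → Prop}, (∀ x ∈ D, P x) → ∀ᵐ x ∂μ.restrict D, P x :=
    fun hP => ae_restrict_of_forall_mem hDopen.measurableSet hP
  obtain ⟨M, hM⟩ := hDbdd.isCompact_closure.bddAbove_image hψ_cont
  have hψM : ∀ x ∈ D, ψ x ≤ M := fun x hx => hM ⟨x, subset_closure hx, rfl⟩
  set N := μ.real D * (q * M ^ (q - 1)) with hN
  suffices h : ∀ t ∈ Icc 0 T, ∀ x ∈ closure D, 0 ≤ v t x - ψ x from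
    fun t ht x hx => sub_nonneg.1 (h t ht x hx)
  refine nonneg_of_mul_le_deriv_sub_laplacian hDopen hDbdd (wt := vt) (K := A * N)
    (hv_cont.sub (hψ_cont.comp continuousOn_snd fun z hz => hz.2))
    (fun t ht x hx => (hv_t t ht x hx).sub_const _) (fun t ht => (hv_x t ht).sub hψ_smooth)
    (fun t ht x hx => ?_) (fun x hx => sub_nonneg.2 (hv_init x hx))
    fun t ht x hx hneg hmin => ?_
  · simpa only [hψ_bdry x hx, sub_zero] using hv_nonneg t ht x (frontier_subset_closure hx)
  have htIcc : t ∈ Icc 0 T := Ioc_subset_Icc_self ht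
  have hvt_cont : ContinuousOn (v t) (closure D) :=
    hv_cont.comp (f := fun y => (t, y)) (by fun_prop) fun y hy => ⟨htIcc, hy⟩
  have hlap : (Δ (fun y => v t y - ψ y)) x = (Δ (v t)) x - (Δ ψ) x :=
    ((hv_x t ht).contDiffAt (hDopen.mem_nhds hx)).laplacian_sub
      (hψ_smooth.contDiffAt (hDopen.mem_nhds hx))
  have hnonlocal : (∫ y in D, ψ y ^ q ∂μ) + N * (v t x - ψ x) ≤ ∫ y in D, v t y ^ q ∂μ := by
    simpa only [hN, measureReal_restrict_apply_univ] using
      integral_rpow_add_mul_le_integral_rpow hq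
        (hae fun y hy => hv_nonneg t htIcc y (subset_closure hy)) (hae hψ_nonneg) (hae hψM)
        (integrableOn_rpow_of_continuousOn_closure hDbdd hq₀ hvt_cont)
        (integrableOn_rpow_of_continuousOn_closure hDbdd hq₀ hψ_cont) hneg.le
        (hae fun y hy => hmin (subset_closure hy))
  have hlocal : c t * v t x ^ p ≤ c t * ψ x ^ p :=
    mul_le_mul_of_nonneg_left (rpow_le_rpow (hv_nonneg t htIcc x (subset_closure hx))
      (sub_neg.1 hneg).le hp) (hc t ht)
  have hN_nonneg : 0 ≤ N :=
    mul_nonneg measureReal_nonneg <| mul_nonneg (by linarith) <|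
      rpow_nonneg ((hψ_nonneg x hx).trans (hψM x hx)) _
  have hrate : A * (N * (v t x - ψ x)) ≤ a t * (N * (v t x - ψ x)) :=
    mul_le_mul_of_nonpos_right (ha t ht).2 (mul_nonpos_of_nonneg_of_nonpos hN_nonneg hneg.le)
  rw [hlap]
  linarith [mul_le_mul_of_nonneg_left hnonlocal (ha t ht).1, hv_super t ht x hx, hψ_sub t ht x hx]

end Parabolic

section EigenfunctionSubsolution

open scoped Laplacian

theorem mul_add_mul_exp_mul_rpow_le {k lam b C J f p q θ Θ : ℝ} (hk : 0 ≤ k) (hlam : 0 ≤ lam)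
    (hb : 1 ≤ b) (hp : 1 ≤ p) (hpq : p ≤ q) (hθ : |θ| ≤ Θ) (hf : 0 ≤ f) (hfC : f ≤ C)
    (hcond : k * C ^ p + lam * C ≤ b ^ (q - p) * exp (-((q - 1) * Θ)) * J) :
    lam * (b * f) + k * exp ((p - 1) * θ) * (b * f) ^ p ≤ exp ((q - 1) * θ) * (b ^ q * J) := by
  have hb₀ : 0 < b := by linarith
  have : 0 ≤ C := hf.trans hfC
  have hΘ : 0 ≤ Θ := (abs_nonneg θ).trans hθ
  have hσ : 0 ≤ θ + Θ := by linarith [neg_le_of_abs_le hθ]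
  have hbp : b ≤ b ^ p := self_le_rpow_of_one_le hb hp
  have hexp_one : 1 ≤ exp ((q - 1) * (θ + Θ)) :=
    one_le_exp (mul_nonneg (by linarith) hσ)
  have hexp_p : exp ((p - 1) * θ) ≤ exp ((q - 1) * (θ + Θ)) := by
    refine exp_le_exp.2 ?_
    calc (p - 1) * θ ≤ (p - 1) * (θ + Θ) :=
          mul_le_mul_of_nonneg_left (by linarith) (by linarith)
      _ ≤ (q - 1) * (θ + Θ) := by gcongr
  calc lam * (b * f) + k * exp ((p - 1) * θ) * (b * f) ^ p
      = 1 * (lam * (b * f)) + exp ((p - 1) * θ) * (k * (b ^ p * f ^ p)) := by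
        rw [mul_rpow hb₀.le hf]; ring
    _ ≤ exp ((q - 1) * (θ + Θ)) * (lam * (b ^ p * C))
          + exp ((q - 1) * (θ + Θ)) * (k * (b ^ p * C ^ p)) := by gcongr
    _ = exp ((q - 1) * (θ + Θ)) * b ^ p * (k * C ^ p + lam * C) := by ring
    _ ≤ exp ((q - 1) * (θ + Θ)) * b ^ p * (b ^ (q - p) * exp (-((q - 1) * Θ)) * J) := by gcongr
    _ = exp ((q - 1) * (θ + Θ) + -((q - 1) * Θ)) * (b ^ (p + (q - p)) * J) := by
        rw [exp_add, rpow_add hb₀]; ring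
    _ = exp ((q - 1) * θ) * (b ^ q * J) := by ring_nf

theorem nonlocal_subsolution_const_smul {E : Type*} [NormedAddCommGroup E] [InnerProductSpace ℝ E]
    [FiniteDimensional ℝ E] [MeasurableSpace E] {μ : Measure E} {D : Set E}
    (hD : MeasurableSet D) {φ : E → ℝ} {k lam b C p q θ Θ : ℝ} (hk : 0 ≤ k) (hlam : 0 ≤ lam)
    (hb : 1 ≤ b) (hp : 1 ≤ p) (hpq : p ≤ q) (hθ : |θ| ≤ Θ) (hφ : ∀ x ∈ D, φ x ∈ Icc 0 C)
    (hcond : k * C ^ p + lam * C ≤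
      b ^ (q - p) * exp (-((q - 1) * Θ)) * ∫ y in D, φ y ^ q ∂μ)
    {x : E} (hx : x ∈ D) (hφ_smooth : ContDiffAt ℝ 2 φ x)
    (hφ_eig : -(Δ φ) x ≤ lam * φ x) :
    0 ≤ (Δ (b • φ)) x + exp ((q - 1) * θ) * (∫ y in D, (b • φ) y ^ q ∂μ)
      - k * exp ((p - 1) * θ) * (b • φ) x ^ p := by
  have hb₀ : 0 ≤ b := by linarith
  have hint : ∫ y in D, (b • φ) y ^ q ∂μ = b ^ q * ∫ y in D, φ y ^ q ∂μ := by
    rw [← integral_const_mul]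
    exact setIntegral_congr_fun hD fun y hy => mul_rpow hb₀ (hφ y hy).1
  have hlap : b * -(Δ φ) x ≤ b * (lam * φ x) := mul_le_mul_of_nonneg_left hφ_eig hb₀
  have hreaction :=
    mul_add_mul_exp_mul_rpow_le hk hlam hb hp hpq hθ (hφ x hx).1 (hφ x hx).2 hcond
  rw [hint, InnerProductSpace.laplacian_smul b hφ_smooth, Pi.smul_apply, smul_eq_mul, smul_eq_mul]
  linarith

end EigenfunctionSubsolution

theorem le_ciSup_coe_of_continuousOn {X : Type*} [TopologicalSpace X] {s K : Set X} {f : X → ℝ}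
    (hK : IsCompact K) (hf : ContinuousOn f K) (hsK : s ⊆ K) {x : X} (hx : x ∈ s) :
    f x ≤ ⨆ y : s, f y := by
  refine le_ciSup (f := fun y : s => f y) ?_ ⟨x, hx⟩
  rw [← image_eq_range]
  exact (hK.bddAbove_image hf).mono (image_mono hsK)

theorem mul_add_mul_rpow_mul_setIntegral_rpow_nonneg {α : Type*} [MeasurableSpace α]
    {μ : Measure α} {s : Set α} (hs : MeasurableSet s) {f : α → ℝ} (hf : ∀ y ∈ s, 0 ≤ f y)
    {γ δ : ℝ} (hγ : 0 ≤ γ) (hδ : 0 ≤ δ) (m n : ℝ) {x : α} (hx : x ∈ s) :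
    0 ≤ γ * f x + δ * f x ^ m * ∫ y in s, f y ^ n ∂μ := by
  have hint_nonneg : 0 ≤ ∫ y in s, f y ^ n ∂μ :=
    setIntegral_nonneg hs fun y hy => rpow_nonneg (hf y hy) n
  have := hf x hx
  positivity

theorem statement15_general {d : ℕ} {μ : Measure (EuclideanSpace ℝ (Fin d))}
    [IsFiniteMeasureOnCompacts μ] {T : ℝ} {D : Set (EuclideanSpace ℝ (Fin d))}
    (hDopen : IsOpen D) (hDbdd : Bornology.IsBounded D) {k η p q lam1 : ℝ} (hk : 0 ≤ k)
    (hη : 0 ≤ η) (hp : 1 ≤ p) (hpq : p ≤ q) (hlam : 0 ≤ lam1)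
    {φ : EuclideanSpace ℝ (Fin d) → ℝ} (hφ_cont : ContinuousOn φ (closure D))
    (hφ_smooth : ContDiffOn ℝ 2 φ D) (hφ_nonneg : ∀ x ∈ D, 0 ≤ φ x)
    (hφ_bdry : ∀ x ∈ frontier D, φ x = 0)
    (hφ_eig : ∀ x ∈ D, -laplacian φ x ≤ lam1 * φ x)
    (hφ_int : (∫ x in D, φ x ∂μ) = 1)
    {C₁ : ℝ} (hC₁ : C₁ = ⨆ x : D, φ (x : EuclideanSpace ℝ (Fin d)))
    {β : ℝ → ℝ} (hβ : ContinuousOn β (Icc 0 T)) {b : ℝ} (hb : 1 ≤ b)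
    (hcond : ∀ t ∈ Icc 0 T, (k * C₁ ^ p + lam1 * C₁) * μ.real D ^ (q - 1)
      ≤ b ^ (q - p) * exp (-(η * (q - 1) * ⨆ s : Icc (0 : ℝ) t, |β (s : ℝ)|)))
    {v vt : ℝ → EuclideanSpace ℝ (Fin d) → ℝ}
    (hv_cont : ContinuousOn (fun z : ℝ × EuclideanSpace ℝ (Fin d) => v z.1 z.2)
      (Icc 0 T ×ˢ closure D))
    (hv_nonneg : ∀ t ∈ Icc 0 T, ∀ x ∈ closure D, 0 ≤ v t x)
    (hv_t : ∀ t ∈ Ioc 0 T, ∀ x ∈ D, HasDerivWithinAt (fun s => v s x) (vt t x) (Icc 0 T) t)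
    (hv_x : ∀ t ∈ Ioc 0 T, ContDiffOn ℝ 2 (v t) D)
    (hv_super : ∀ t ∈ Ioc 0 T, ∀ x ∈ D,
      laplacian (v t) x + exp ((q - 1) * η * β t) * (∫ y in D, v t y ^ q ∂μ)
        - k * exp ((p - 1) * η * β t) * v t x ^ p ≤ vt t x)
    (hv_init : ∀ x ∈ D, b * φ x ≤ v 0 x) :
    ∀ t ∈ Icc 0 T, ∀ x ∈ closure D, b * φ x ≤ v t x := by
  have hq : 1 ≤ q := hp.trans hpq
  have hφ_mem : ∀ x ∈ D, φ x ∈ Icc 0 C₁ := fun x hx =>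
    ⟨hφ_nonneg x hx,
      hC₁ ▸ le_ciSup_coe_of_continuousOn hDbdd.isCompact_closure hφ_cont subset_closure hx⟩
  have hθ : ∀ r ∈ Icc 0 T, ∀ t ∈ Icc 0 r, |η * β t| ≤ η * ⨆ s : Icc (0 : ℝ) r, |β s| := by
    intro r hr t ht
    rw [abs_mul, abs_of_nonneg hη]
    exact mul_le_mul_of_nonneg_left (le_ciSup_coe_of_continuousOn isCompact_Icc
      (hβ.abs.mono (Icc_subset_Icc_right hr.2)) Subset.rfl ht) hη
  have hcond' : ∀ t ∈ Icc 0 T, k * C₁ ^ p + lam1 * C₁ ≤ b ^ (q - p) *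
      exp (-((q - 1) * (η * ⨆ s : Icc (0 : ℝ) t, |β s|))) * ∫ y in D, φ y ^ q ∂μ := by
    intro t ht
    have : IsFiniteMeasure (μ.restrict D) := isFiniteMeasure_restrict.2 hDbdd.measure_lt_top.ne
    refine const_le_mul_integral_rpow_of_integral_eq_one hq
      (ae_restrict_of_forall_mem hDopen.measurableSet hφ_nonneg)
      (integrableOn_rpow_of_continuousOn_closure hDbdd (by linarith) hφ_cont) hφ_int
      (by positivity) ?_
    rw [measureReal_restrict_apply_univ, ← mul_assoc, mul_comm (q - 1)]
    exact hcond t ht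
  refine le_of_nonlocal_supersolution (μ := μ) (p := p) (ψ := b • φ) hDopen hDbdd (by linarith) hq
    (A := exp ((q - 1) * (η * ⨆ s : Icc (0 : ℝ) T, |β s|)))
    (a := fun t => exp ((q - 1) * (η * β t))) (c := fun t => k * exp ((p - 1) * (η * β t)))
    (fun t ht => ⟨(exp_pos _).le, exp_le_exp.2 ?_⟩) (fun t _ => mul_nonneg hk (exp_pos _).le)
    (hφ_cont.const_smul b) (hφ_smooth.const_smul b)
    (fun x hx => mul_nonneg (by linarith) (hφ_nonneg x hx))
    (fun x hx => by simp [hφ_bdry x hx]) (fun t ht x hx => ?_) hv_cont hv_nonneg hv_t hv_x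
    (fun t ht x hx => ?_) hv_init
  · have hT : T ∈ Icc 0 T := right_mem_Icc.2 (ht.1.le.trans ht.2)
    exact mul_le_mul_of_nonneg_left (le_of_abs_le (hθ T hT t (Ioc_subset_Icc_self ht)))
      (by linarith)
  · have htIcc : t ∈ Icc 0 T := Ioc_subset_Icc_self ht
    have hφx := hφ_smooth.contDiffAt (hDopen.mem_nhds hx)
    exact nonlocal_subsolution_const_smul hDopen.measurableSet hk hlam hb hp hpq
      (hθ t htIcc t (right_mem_Icc.2 ht.1.le)) hφ_mem (hcond' t htIcc) hx hφx
      (laplacian_eq_laplacian_of_contDiffAt hφx ▸ hφ_eig x hx)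
  · have hvx := (hv_x t ht).contDiffAt (hDopen.mem_nhds hx)
    simpa only [laplacian_eq_laplacian_of_contDiffAt hvx, mul_assoc] using hv_super t ht x hx

/-- Under the first condition of (B1), the solution `v` of the transformed random
PDE with initial datum at least `b·φ` stays above `b·φ`, where `φ` is the first
(normalized) Dirichlet eigenfunction of `−Δ` with eigenvalue `λ₁`. -/
theorem statement15 {d : ℕ} (hd : 1 ≤ d) {T : ℝ} (hT : 0 < T)
    {D : Set (EuclideanSpace ℝ (Fin d))} (hDopen : IsOpen D)
    (hDbdd : Bornology.IsBounded D) (hD0 : 0 < volume D)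
    {k γ δ η : ℝ} (hk : 0 < k) (hγ : 0 ≤ γ) (hδ : 0 ≤ δ) (hη : 0 ≤ η)
    {p q n m : ℝ} (hp : 1 < p) (hq : 1 < q) (hn : 1 < n) (hm : 0 ≤ m)
    (hpq : p ≤ q) (hqmn : q ≤ m + n)
    (lam1 : ℝ) (hlam : 0 < lam1)
    (φ : EuclideanSpace ℝ (Fin d) → ℝ)
    -- `φ` is the first (normalized) Dirichlet eigenfunction of `−Δ` on `D`
    (hφ_cont : ContinuousOn φ (closure D))
    (hφ_smooth : ContDiffOn ℝ 2 φ D)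
    (hφ_pos : ∀ x ∈ D, 0 < φ x)
    (hφ_bdry : ∀ x ∈ frontier D, φ x = 0)
    (hφ_eig : ∀ x ∈ D, -laplacian φ x = lam1 * φ x)
    (hφ_int : (∫ x in D, φ x) = 1)
    (C₁ : ℝ) (hC₁ : C₁ = ⨆ x : D, φ (x : EuclideanSpace ℝ (Fin d)))
    (β : ℝ → ℝ) (hβ : ContinuousOn β (Icc 0 T))
    (b : ℝ) (hb : 1 < b)
    -- the first condition of (B1), with `β*(t) = sup_{0≤s≤t}|β(s)|`
    (hcond : ∀ t ∈ Icc 0 T,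
      (k * C₁ ^ p + lam1 * C₁) * (volume D).toReal ^ (q - 1)
        ≤ b ^ (q - p) * exp (-(η * (m + n - 1) * (⨆ s : Icc (0:ℝ) t, |β (s : ℝ)|))))
    (v vt : ℝ → EuclideanSpace ℝ (Fin d) → ℝ)
    -- `v` is continuous and nonnegative on `[0,T] × D̄`
    (hv_cont : ContinuousOn (fun pr : ℝ × EuclideanSpace ℝ (Fin d) => v pr.1 pr.2)
      (Icc 0 T ×ˢ closure D))
    (hv_nn : ∀ t ∈ Icc 0 T, ∀ x ∈ closure D, 0 ≤ v t x)
    -- the time derivative `∂v/∂t = vt` exists and is continuous on `(0,T] × D`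
    (hv_t : ∀ t ∈ Ioc 0 T, ∀ x ∈ D, HasDerivAt (fun s => v s x) (vt t x) t)
    (hvt_cont : ContinuousOn (fun pr : ℝ × EuclideanSpace ℝ (Fin d) => vt pr.1 pr.2)
      (Ioc 0 T ×ˢ D))
    (hv_x : ∀ t ∈ Ioc 0 T, ContDiffOn ℝ 2 (v t) D)
    -- `v` solves the transformed PDE on `(0,T] × D`
    (hv_pde : ∀ t ∈ Ioc 0 T, ∀ x ∈ D,
      vt t x = laplacian (v t) x + γ * v t x
        + exp ((q - 1) * η * β t) * (∫ y in D, v t y ^ q)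
        - k * exp ((p - 1) * η * β t) * v t x ^ p
        + δ * exp ((m + n - 1) * η * β t) * v t x ^ m * (∫ y in D, v t y ^ n))
    (hv_bdry : ∀ t ∈ Ioc 0 T, ∀ x ∈ frontier D, v t x = 0)
    (hv_init : ∀ x ∈ D, b * φ x ≤ v 0 x) :
    ∀ t ∈ Icc 0 T, ∀ x ∈ closure D, b * φ x ≤ v t x := by
  refine statement15_general hDopen hDbdd hk.le hη hp.le hpq hlam.le hφ_cont hφ_smooth
    (fun x hx => (hφ_pos x hx).le) hφ_bdry (fun x hx => (hφ_eig x hx).le) hφ_int hC₁ hβ hb.le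
    (fun t ht => (hcond t ht).trans ?_) hv_cont hv_nn
    (fun t ht x hx => (hv_t t ht x hx).hasDerivWithinAt) hv_x (fun t ht x hx => ?_) hv_init
  · have hβ_nonneg : 0 ≤ ⨆ s : Icc (0 : ℝ) t, |β s| := Real.iSup_nonneg fun s => abs_nonneg _
    gcongr
  · have hv_nonneg : ∀ y ∈ D, 0 ≤ v t y := fun y hy =>
      hv_nn t (Ioc_subset_Icc_self ht) y (subset_closure hy)
    linarith [hv_pde t ht x hx, mul_add_mul_rpow_mul_setIntegral_rpow_nonneg (μ := volume)
      hDopen.measurableSet hv_nonneg hγ (mul_nonneg hδ (exp_pos ((m + n - 1) * η * β t)).le) m n hx]
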